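/- arXiv:math/0312232 — 2 statements merged into one kernel-verified Lean document; each statement's English description precedes it below -/
import Mathlib

section
/- Let 0 ≤ r1, r2 ≤ n and 0 ≤ s ≤ min(r1, n − r1, r2, n − r2). Then for all t ∈ ℂ: λ_s^{r1,r2}(t; n) = (1 / ([n−r1]_s [r2]_s)) · Σ_{j=0}^s (−1)^j binom(s, j) · [t]_j · [r2 − t]_{s−j} · [r1 − r2 + t]_j · [n − r1 − t]_{s−j}, where [z]_k = z(z−1)⋯(z−k+1) for z ∈ ℂ. -/
/-- Falling factorial `z(z-1)⋯(z-k+1)` for complex `z`. -/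
noncomputable def cfall (z : ℂ) (k : ℕ) : ℂ := ∏ i ∈ Finset.range k, (z - i)

/-- Generalized binomial coefficient `binom(t, j)` for complex `t`. -/
noncomputable def cbinom (t : ℂ) (j : ℕ) : ℂ := cfall t j / (Nat.factorial j)

/-- The Hahn kernel `λ_s^{r1,r2}(t; n)`. -/
noncomputable def hahn (n r1 r2 s : ℕ) (t : ℂ) : ℂ :=
  ∑ j ∈ Finset.range (s + 1),
    (-1 : ℂ) ^ j * cbinom t j * cfall (s : ℂ) j * cfall ((n : ℂ) - s + 1) j /
      (cfall ((n : ℂ) - r1) j * cfall (r2 : ℂ) j)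

lemma cfall_zero (z : ℂ) : cfall z 0 = 1 := by simp [cfall]

lemma cfall_succ (z : ℂ) (k : ℕ) : cfall z (k + 1) = cfall z k * (z - k) := by
  simp [cfall, Finset.prod_range_succ]

lemma cfall_succ' (z : ℂ) (k : ℕ) : cfall z (k + 1) = z * cfall (z - 1) k := by
  simp only [cfall, Finset.prod_range_succ']
  rw [mul_comm]
  congr 1
  · simp
  · apply Finset.prod_congr rfl
    intro i _
    push_cast
    ring

lemma cfall_add (z : ℂ) (j k : ℕ) : cfall z (j + k) = cfall z j * cfall (z - j) k := by
  induction k with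
  | zero => simp [cfall_zero]
  | succ k ih =>
    rw [← add_assoc, cfall_succ, ih, cfall_succ]
    push_cast
    ring

lemma cfall_natCast (s j : ℕ) : cfall (s : ℂ) j = (s.choose j : ℂ) * (j.factorial : ℂ) := by
  induction j with
  | zero => simp [cfall_zero]
  | succ j ih =>
    rw [cfall_succ, ih, Nat.factorial_succ]
    rcases le_or_gt j s with h | h
    · have := Nat.choose_succ_right_eq s j
      have h2 : ((s.choose (j+1) : ℕ) : ℂ) * (j + 1) = s.choose j * ((s : ℂ) - j) := by
        rw [← Nat.cast_sub h]; exact_mod_cast this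
      push_cast
      linear_combination (-(j.factorial : ℂ)) * h2
    · rw [Nat.choose_eq_zero_of_lt h, Nat.choose_eq_zero_of_lt (by omega)]
      simp

lemma cfall_nat_ne (m s : ℕ) (h : s ≤ m) : cfall (m : ℂ) s ≠ 0 := by
  rw [cfall_natCast]
  exact mul_ne_zero (by exact_mod_cast (Nat.choose_pos h).ne')
    (by exact_mod_cast s.factorial_ne_zero)

/-- The right-hand sum. -/
noncomputable def RS (s : ℕ) (A B D t : ℂ) : ℂ :=
  ∑ j ∈ Finset.range (s + 1), (-1 : ℂ) ^ j * (s.choose j : ℂ) * cfall t j * cfall (B - t) (s - j) *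
    cfall (D + t) j * cfall (A - t) (s - j)

/-- The left-hand sum, denominators cleared. -/
noncomputable def LS (s : ℕ) (A B D t : ℂ) : ℂ :=
  ∑ j ∈ Finset.range (s + 1), (-1 : ℂ) ^ j * (s.choose j : ℂ) * cfall t j *
    cfall (A + B + D - s + 1) j * cfall (A - j) (s - j) * cfall (B - j) (s - j)

lemma sum_split (s : ℕ) (T u w : ℕ → ℂ) (h0 : T 0 = u 0) (hl : u (s + 1) = 0)
    (h : ∀ j ≤ s, T (j + 1) = u (j + 1) + w j) :
    ∑ j ∈ Finset.range (s + 2), T j = ∑ j ∈ Finset.range (s + 1), (u j + w j) := by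
  have e1 : ∑ j ∈ Finset.range (s + 2), u j = ∑ j ∈ Finset.range (s + 1), u j := by
    rw [Finset.sum_range_succ, hl, add_zero]
  rw [Finset.sum_range_succ', Finset.sum_add_distrib, ← e1, Finset.sum_range_succ' u, h0,
    Finset.sum_congr rfl (fun j hj => h j (by simp at hj; omega)), Finset.sum_add_distrib]
  ring

lemma RS_succ (s : ℕ) (A B D t : ℂ) :
    RS (s + 1) A B D t = (A - t) * (B - t) * RS s (A - 1) (B - 1) D t
      - t * (D + t) * RS s (A - 1) (B - 1) D (t - 1) := by
  unfold RS
  rw [sum_split s _ (fun j => (-1 : ℂ) ^ j * (s.choose j : ℂ) * cfall t j *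
      cfall (B - t) (s + 1 - j) * cfall (D + t) j * cfall (A - t) (s + 1 - j))
    (fun j => (-1 : ℂ) ^ (j + 1) * (s.choose j : ℂ) * cfall t (j + 1) *
      cfall (B - t) (s - j) * cfall (D + t) (j + 1) * cfall (A - t) (s - j))]
  · rw [Finset.mul_sum, Finset.mul_sum, ← Finset.sum_sub_distrib]
    apply Finset.sum_congr rfl
    intro j hj
    have hj' : j ≤ s := by simp at hj; omega
    rw [show s + 1 - j = (s - j) + 1 by omega, cfall_succ' (B - t), cfall_succ' (A - t),
      cfall_succ' t, cfall_succ' (D + t)]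
    rw [show B - 1 - (t - 1) = B - t by ring, show A - 1 - (t - 1) = A - t by ring,
      show D + (t - 1) = D + t - 1 by ring, show B - 1 - t = B - t - 1 by ring,
      show A - 1 - t = A - t - 1 by ring]
    ring
  · simp
  · simp
  · intro j hj
    rw [Nat.choose_succ_succ, show s + 1 - (j + 1) = s - j by omega]
    push_cast
    ring

lemma LS_succ (s : ℕ) (A B D t : ℂ) :
    LS (s + 1) A B D t = (A - t) * (B - t) * LS s (A - 1) (B - 1) D t
      - t * (D + t) * LS s (A - 1) (B - 1) D (t - 1) := by
  unfold LS
  rw [sum_split s _ (fun j => (-1 : ℂ) ^ j * (s.choose j : ℂ) * cfall t j *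
      cfall (A + B + D - s - 1) j * cfall (A - j) (s + 1 - j) * cfall (B - j) (s + 1 - j))
    (fun j => (-1 : ℂ) ^ (j + 1) * (s.choose j : ℂ) * cfall t (j + 1) * (A + B + D - j) *
      cfall (A + B + D - s - 1) j * cfall (A - j - 1) (s - j) * cfall (B - j - 1) (s - j))]
  · rw [Finset.mul_sum, Finset.mul_sum, ← Finset.sum_sub_distrib]
    apply Finset.sum_congr rfl
    intro j hj
    have hj' : j ≤ s := by simp at hj; omega
    have e : t * cfall (t - 1) j = cfall t j * (t - j) := by
      rw [← cfall_succ', cfall_succ]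
    rw [show s + 1 - j = (s - j) + 1 by omega, cfall_succ' (B - j), cfall_succ' (A - j),
      cfall_succ t]
    rw [show A - 1 + (B - 1) + D - s + 1 = A + B + D - s - 1 by ring,
      show B - 1 - (j : ℂ) = B - j - 1 by ring,
      show A - 1 - (j : ℂ) = A - j - 1 by ring]
    linear_combination ((D + t) * (-1 : ℂ) ^ j * (s.choose j : ℂ) *
      cfall (A + B + D - s - 1) j * cfall (A - j - 1) (s - j) * cfall (B - j - 1) (s - j)) * e
  · simp [cfall_zero]
  · simp
  · intro j hj
    have h2 : ((s.choose (j+1) : ℕ) : ℂ) * (j + 1) = s.choose j * ((s : ℂ) - j) := by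
      rw [← Nat.cast_sub hj]; exact_mod_cast Nat.choose_succ_right_eq s j
    rw [Nat.choose_succ_succ, show s + 1 - (j + 1) = s - j by omega]
    push_cast
    rw [show A + B + D - ((s : ℂ) + 1) + 1 = A + B + D - s by ring,
      cfall_succ' (A + B + D - s), cfall_succ (A + B + D - s - 1),
      show B - ((j : ℂ) + 1) = B - j - 1 by ring,
      show A - ((j : ℂ) + 1) = A - j - 1 by ring]
    linear_combination ((-1 : ℂ) ^ (j + 1) * cfall t (j + 1) *
      cfall (A + B + D - s - 1) j * cfall (A - j - 1) (s - j) * cfall (B - j - 1) (s - j)) * h2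

lemma LS_eq_RS (s : ℕ) : ∀ A B D t : ℂ, LS s A B D t = RS s A B D t := by
  induction s with
  | zero => intro A B D t; simp [LS, RS, cfall_zero]
  | succ s ih => intro A B D t; rw [LS_succ, RS_succ, ih, ih]

/-- For `0 ≤ r1, r2 ≤ n`, `0 ≤ s ≤ min(r1, n-r1, r2, n-r2)` and all `t ∈ ℂ`,
`λ_s^{r1,r2}(t; n) = (1/([n-r1]_s [r2]_s)) Σ_{j=0}^s (-1)^j binom(s,j)
 [t]_j [r2-t]_{s-j} [r1-r2+t]_j [n-r1-t]_{s-j}`. -/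
theorem stmt_17 (n r1 r2 s : ℕ) (h1 : r1 ≤ n) (h2 : r2 ≤ n)
    (hs : s ≤ min (min r1 (n - r1)) (min r2 (n - r2))) (t : ℂ) :
    hahn n r1 r2 s t =
      (1 / (cfall ((n : ℂ) - r1) s * cfall (r2 : ℂ) s)) *
        ∑ j ∈ Finset.range (s + 1),
          (-1 : ℂ) ^ j * (s.choose j : ℂ) * cfall t j * cfall ((r2 : ℂ) - t) (s - j) *
            cfall ((r1 : ℂ) - r2 + t) j * cfall ((n : ℂ) - r1 - t) (s - j) := by
  have hA : s ≤ n - r1 := by omega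
  have hB : s ≤ r2 := by omega
  have nA : cfall ((n : ℂ) - r1) s ≠ 0 := by
    rw [← Nat.cast_sub h1]; exact cfall_nat_ne _ _ hA
  have nB : cfall (r2 : ℂ) s ≠ 0 := cfall_nat_ne _ _ hB
  have key := LS_eq_RS s ((n : ℂ) - r1) r2 ((r1 : ℂ) - r2) t
  unfold RS at key
  rw [← key]
  unfold LS hahn
  rw [Finset.mul_sum]
  apply Finset.sum_congr rfl
  intro j hj
  have hj' : j ≤ s := by simp at hj; omega
  have eA := cfall_add ((n : ℂ) - r1) j (s - j)
  have eB := cfall_add (r2 : ℂ) j (s - j)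
  rw [show j + (s - j) = s by omega] at eA eB
  rw [eA] at nA
  rw [eB] at nB
  have a1 := left_ne_zero_of_mul nA
  have a2 := right_ne_zero_of_mul nA
  have b1 := left_ne_zero_of_mul nB
  have b2 := right_ne_zero_of_mul nB
  have hf : (j.factorial : ℂ) ≠ 0 := by exact_mod_cast j.factorial_ne_zero
  rw [eA, eB, cfall_natCast s j, cbinom,
    show (n : ℂ) - r1 + r2 + (r1 - r2) - s + 1 = n - s + 1 by ring]
  generalize cfall ((n : ℂ) - r1) j = x1 at *
  generalize cfall ((n : ℂ) - r1 - j) (s - j) = x2 at *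
  generalize cfall (r2 : ℂ) j = x3 at *
  generalize cfall ((r2 : ℂ) - j) (s - j) = x4 at *
  generalize cfall ((n : ℂ) - s + 1) j = x5 at *
  field_simp
end

section
/- Let Ω be a finite set with |Ω| = n, let 0 ≤ s ≤ n/2 and let r, r0 be integers with s ≤ r, r0 ≤ n − s. Then as linear maps (X_s → ℂ) → (X_s → ℂ): Λ̃_s^{r0,s} ∘ F^{r→r0} ∘ Λ̃_s^{s,r} = k_s^{r,r0} · Λ̃_s^{s,s}, where F^{r→r0} : (X_r → ℂ) → (X_{r0} → ℂ) is the Fourier block (F^{r→r0} ψ)(x) = Σ_{x' ∈ X_r} (−1)^{|x ∩ x'|} ψ(x'), and k_s^{r,r0} = (−2)^s · √(binom(n−2s, r0−s)/binom(n−2s, r−s)) · P_{r−s}(r0−s; n−2s). (This expresses that, in the decomposition of the representation space transported by the unitaries Λ̃_s^{s,r}, the Fourier transform F_X acts on the s-isotypic block with matrix entries k_s^{r,r0}.) -/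
/-- The operator `Λ_s^{r1,r2} : (X_{r1} → ℂ) → (X_{r2} → ℂ)` with kernel
`λ_s^{r1,r2}(|x2 \ x1|; n)`. -/
noncomputable def Lam (Ω : Type*) [Fintype Ω] [DecidableEq Ω] (n r1 r2 s : ℕ)
    (ψ : {x : Finset Ω // x.card = r1} → ℂ) : {x : Finset Ω // x.card = r2} → ℂ :=
  fun x2 => ∑ x1 : {x : Finset Ω // x.card = r1},
    hahn n r1 r2 s ((((x2 : Finset Ω) \ (x1 : Finset Ω)).card : ℕ) : ℂ) * ψ x1

/-- The Krawtchouk polynomial `P_m(k; N) = Σ_{j=0}^m (-1)^j binom(k,j) binom(N-k, m-j)`. -/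
noncomputable def kraw (m k N : ℕ) : ℂ :=
  ∑ j ∈ Finset.range (m + 1), (-1 : ℂ) ^ j * (k.choose j : ℂ) * ((N - k).choose (m - j) : ℂ)

/-- The normalization constant `α_s^{r1,r2}` of the unitary operators `Λ̃_s^{r1,r2}`. -/
noncomputable def alphaConst (n r1 r2 s : ℕ) : ℂ :=
  cfall ((n : ℂ) - r1) s * cfall (r2 : ℂ) s /
    ((Real.sqrt (((n - 2 * s).choose (r1 - s) : ℝ) * ((n - 2 * s).choose (r2 - s) : ℝ)) : ℂ) *
      (s.factorial : ℂ) * cfall ((n : ℂ) - s + 1) s)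

/-- The unitary normalization `Λ̃_s^{r1,r2} = α_s^{r1,r2} Λ_s^{r1,r2}`. -/
noncomputable def LamT (Ω : Type*) [Fintype Ω] [DecidableEq Ω] (n r1 r2 s : ℕ)
    (ψ : {x : Finset Ω // x.card = r1} → ℂ) : {x : Finset Ω // x.card = r2} → ℂ :=
  fun x2 => alphaConst n r1 r2 s * Lam Ω n r1 r2 s ψ x2

/-- The Fourier block `F^{r→r0} : (X_r → ℂ) → (X_{r0} → ℂ)`,
`(F^{r→r0} ψ)(x) = Σ_{x' ∈ X_r} (-1)^{|x ∩ x'|} ψ(x')`. -/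
noncomputable def Fblock (Ω : Type*) [Fintype Ω] [DecidableEq Ω] (r r0 : ℕ)
    (ψ : {x : Finset Ω // x.card = r} → ℂ) : {x : Finset Ω // x.card = r0} → ℂ :=
  fun x => ∑ x' : {x : Finset Ω // x.card = r},
    (-1 : ℂ) ^ (((x : Finset Ω) ∩ (x' : Finset Ω)).card) * ψ x'

/-- The coefficient `k_s^{r,r0}` of the Fourier transform in the unitary basis. -/
noncomputable def kCoef (n r r0 s : ℕ) : ℂ :=
  (-2 : ℂ) ^ s *
    (Real.sqrt (((n - 2 * s).choose (r0 - s) : ℝ) / ((n - 2 * s).choose (r - s) : ℝ)) : ℂ) *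
    kraw (r - s) (r0 - s) (n - 2 * s)

open Finset fwdDiff in
/-- Superset sums re-indexed by complements. -/
lemma aux_superset {Ω : Type*} [DecidableEq Ω] (A y : Finset Ω) (hy : y ⊆ A) (r : ℕ)
    (hr : y.card ≤ r) (g : Finset Ω → ℂ) :
    ∑ x ∈ (powersetCard r A).filter (fun x => y ⊆ x), g x =
      ∑ z ∈ powersetCard (r - y.card) (A \ y), g (y ∪ z) := by
  refine Finset.sum_nbij' (fun x => x \ y) (fun z => y ∪ z) ?_ ?_ ?_ ?_ ?_
  · intro x hx
    simp only [mem_filter, mem_powersetCard] at hx ⊢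
    refine ⟨sdiff_subset_sdiff hx.1.1 le_rfl, ?_⟩
    rw [card_sdiff_of_subset hx.2, hx.1.2]
  · intro z hz
    simp only [mem_filter, mem_powersetCard] at hz ⊢
    refine ⟨⟨union_subset hy (hz.1.trans sdiff_subset), ?_⟩, subset_union_left⟩
    have : Disjoint y z := (disjoint_sdiff).mono_right hz.1
    rw [card_union_of_disjoint this, hz.2]; omega
  · intro x hx
    simp only [mem_filter] at hx
    exact union_sdiff_of_subset hx.2
  · intro z hz
    simp only [mem_powersetCard] at hz
    have : Disjoint y z := (disjoint_sdiff).mono_right hz.1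
    rw [union_sdiff_left]
    exact sdiff_eq_self_of_disjoint this.symm
  · intro x hx
    simp only [mem_filter] at hx
    rw [union_sdiff_of_subset hx.2]

open Finset in
lemma aux_count {Ω : Type*} [DecidableEq Ω] (A y : Finset Ω) (hy : y ⊆ A) (r : ℕ)
    (hr : y.card ≤ r) :
    ((((powersetCard r A).filter (fun x => y ⊆ x)).card : ℕ) : ℂ) =
      ((A.card - y.card).choose (r - y.card) : ℂ) := by
  have := aux_superset A y hy r hr (fun _ => 1)
  simp only [sum_const, nsmul_eq_mul, mul_one] at this
  rw [this, card_powersetCard, card_sdiff_of_subset hy]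

/-- Harmonic functions on `s`-subsets. -/
def HarmFn {Ω : Type*} [Fintype Ω] [DecidableEq Ω] (s : ℕ) (f : Finset Ω → ℂ) : Prop :=
  ∀ w : Finset Ω, w.card < s →
    ∑ y ∈ (Finset.powersetCard s Finset.univ).filter (fun y => w ⊆ y), f y = 0

open Finset in
lemma aux_harm_of_pred {Ω : Type*} [Fintype Ω] [DecidableEq Ω] (s : ℕ) (f : Finset Ω → ℂ)
    (h : ∀ w : Finset Ω, w.card + 1 = s → ∑ ω ∈ wᶜ, f (insert ω w) = 0) : HarmFn s f := by
  have key : ∀ d : ℕ, ∀ w : Finset Ω, w.card + 1 + d = s →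
      ∑ y ∈ (powersetCard s univ).filter (fun y => w ⊆ y), f y = 0 := by
    intro d
    induction d with
    | zero =>
      intro w hw
      rw [aux_superset univ w (subset_univ _) s (by omega)]
      have h1 : s - w.card = 1 := by omega
      rw [h1, powersetCard_one, sum_map, ← h w (by omega), compl_eq_univ_sdiff]
      refine sum_congr rfl fun ω _ => ?_
      simp only [Function.Embedding.coeFn_mk]
      rw [insert_eq, union_comm]
    | succ d ih =>
      intro w hw
      have h1 : ∑ ω ∈ wᶜ, ∑ y ∈ (powersetCard s univ).filter (fun y => insert ω w ⊆ y), f y = 0 := by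
        refine sum_eq_zero fun ω hω => ih _ ?_
        rw [card_insert_of_notMem (by simpa using hω)]; omega
      rw [Finset.sum_comm' (t' := (powersetCard s univ).filter (fun y => w ⊆ y))
        (s' := fun y => y \ w)] at h1
      · have h2 : ∀ y ∈ (powersetCard s (univ : Finset Ω)).filter (fun y => w ⊆ y),
            ∑ ω ∈ y \ w, f y = ((d + 2 : ℕ) : ℂ) * f y := by
          intro y hy
          simp only [mem_filter, mem_powersetCard] at hy
          rw [sum_const, card_sdiff_of_subset hy.2, nsmul_eq_mul]
          congr 2; omega
        rw [sum_congr rfl h2, ← mul_sum] at h1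
        have h3 : ((d + 2 : ℕ) : ℂ) ≠ 0 := Nat.cast_ne_zero.mpr (by omega)
        exact (mul_eq_zero.mp h1).resolve_left h3
      · intro ω y
        simp only [mem_compl, mem_filter, mem_powersetCard, insert_subset_iff, mem_sdiff]
        tauto
  intro w hw
  exact key (s - w.card - 1) w (by omega)

open Finset in
/-- number of j-subsets weighted -/
lemma aux_newton_j {Ω : Type*} [Fintype Ω] [DecidableEq Ω] (s j : ℕ) (f : Finset Ω → ℂ)
    (x0 : Finset Ω) :
    ∑ y ∈ powersetCard s univ, f y * ((y ∩ x0).card.choose j : ℂ) =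
      ∑ w ∈ powersetCard j x0, ∑ y ∈ (powersetCard s univ).filter (fun y => w ⊆ y), f y := by
  rw [Finset.sum_comm' (t' := powersetCard s univ) (s' := fun y => powersetCard j (y ∩ x0))]
  · refine sum_congr rfl fun y _ => ?_
    rw [sum_const, card_powersetCard, nsmul_eq_mul, mul_comm]
  · intro w y
    simp only [mem_filter, mem_powersetCard, subset_inter_iff]
    tauto

open Finset fwdDiff in
lemma aux_newton {Ω : Type*} [Fintype Ω] [DecidableEq Ω] (s : ℕ) (f : Finset Ω → ℂ)
    (hf : HarmFn s f) (φ : ℕ → ℂ) (x0 : Finset Ω) :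
    ∑ y ∈ powersetCard s univ, f y * φ (y ∩ x0).card =
      (∑ k ∈ range (s + 1), (-1 : ℂ) ^ (s - k) * (s.choose k : ℂ) * φ k) *
        ∑ y ∈ powersetCard s x0, f y := by
  have h1 : ∀ k ≤ s, φ k = ∑ j ∈ range (s + 1), (k.choose j : ℂ) * (Δ_[1])^[j] φ 0 := by
    intro k hk
    have := shift_eq_sum_fwdDiff_iter (1 : ℕ) φ k 0
    simp only [zero_add, smul_eq_mul, mul_one, nsmul_eq_mul] at this
    rw [this]
    refine sum_subset (by intro a; simp only [mem_range]; omega) ?_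
    intro j _ hj
    simp only [mem_range, not_lt] at hj
    rw [Nat.choose_eq_zero_of_lt (by omega)]; simp
  have h2 : ∀ y ∈ powersetCard s (univ : Finset Ω), f y * φ (y ∩ x0).card =
      ∑ j ∈ range (s + 1), (Δ_[1])^[j] φ 0 * (f y * ((y ∩ x0).card.choose j : ℂ)) := by
    intro y hy
    rw [h1 _ ((card_le_card inter_subset_left).trans (mem_powersetCard.mp hy).2.le), mul_sum]
    exact sum_congr rfl fun j _ => by ring
  rw [sum_congr rfl h2, sum_comm]
  simp_rw [← mul_sum, aux_newton_j]
  rw [sum_range_succ, sum_eq_zero, zero_add]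
  · congr 1
    · rw [fwdDiff_iter_eq_sum_shift]
      refine sum_congr rfl fun k _ => ?_
      simp
    · refine sum_congr rfl fun w hw => ?_
      have hw := mem_powersetCard.mp hw
      rw [sum_eq_single w]
      · intro y hy hne
        simp only [mem_filter, mem_powersetCard] at hy
        exact absurd (eq_of_subset_of_card_le hy.2 (by omega)).symm hne
      · intro h
        simp [hw.2] at h
  · intro j hj
    rw [sum_eq_zero, mul_zero]
    intro w hw
    refine hf w ?_
    rw [(mem_powersetCard.mp hw).2]; simpa using hj

open Finset Polynomial in
lemma aux_coeff_one_sub (k i : ℕ) : ((1 - X : ℂ[X]) ^ k).coeff i = (-1) ^ i * (k.choose i : ℂ) := by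
  have h : (1 - X : ℂ[X]) ^ k = ((1 + X) ^ k : ℂ[X]).comp (C (-1) * X) := by
    simp [sub_eq_add_neg]
  rw [h, comp_C_mul_X_coeff, coeff_one_add_X_pow, mul_comm]

open Finset Polynomial in
lemma aux_kraw (m k N : ℕ) :
    kraw m k N = ((1 - X : ℂ[X]) ^ k * (1 + X) ^ (N - k)).coeff m := by
  rw [coeff_mul, Finset.Nat.sum_antidiagonal_eq_sum_range_succ_mk, kraw]
  refine sum_congr rfl fun j _ => ?_
  rw [aux_coeff_one_sub, coeff_one_add_X_pow]

open Finset Polynomial in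
lemma aux_char {Ω : Type*} [DecidableEq Ω] (A B : Finset Ω) (m : ℕ) :
    ∑ z ∈ powersetCard m A, (-1 : ℂ) ^ (z ∩ B).card =
      ((1 - X : ℂ[X]) ^ (A ∩ B).card * (1 + X) ^ (A \ B).card).coeff m := by
  have h := Finset.prod_one_add (f := fun i => if i ∈ B then (-X : ℂ[X]) else X) A
  have h1 : ∏ i ∈ A, (1 + (if i ∈ B then (-X : ℂ[X]) else X)) =
      (1 - X : ℂ[X]) ^ (A ∩ B).card * (1 + X) ^ (A \ B).card := by
    have : ∀ i ∈ A, (1 + (if i ∈ B then (-X : ℂ[X]) else X)) = if i ∈ B then 1 - X else 1 + X := by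
      intro i _; split_ifs <;> ring
    rw [prod_congr rfl this, prod_ite, prod_const, prod_const, filter_mem_eq_inter,
      filter_notMem_eq_sdiff]
  have h2 : ∀ z : Finset Ω, ∏ i ∈ z, (if i ∈ B then (-X : ℂ[X]) else X) =
      C ((-1 : ℂ) ^ (z ∩ B).card) * X ^ z.card := by
    intro z
    have : ∀ i ∈ z, (if i ∈ B then (-X : ℂ[X]) else X) = (if i ∈ B then (-1) else 1) * X := by
      intro i _; split_ifs <;> ring
    rw [prod_congr rfl this, prod_mul_distrib, prod_const, prod_ite, prod_const, prod_const,
      filter_mem_eq_inter]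
    simp
  rw [← h1, h, finsetSum_coeff]
  simp_rw [h2, coeff_C_mul, coeff_X_pow]
  rw [powersetCard_eq_filter, sum_filter]
  refine sum_congr rfl fun z _ => ?_
  by_cases hz : z.card = m
  · simp [hz]
  · simp [hz, Ne.symm hz]

open Finset Polynomial in
lemma aux_kraw_sum (n r r0 s : ℕ) (hr01 : s ≤ r0) (hr02 : r0 + s ≤ n) :
    ∑ k ∈ range (s + 1), (-1 : ℂ) ^ (s - k) * (s.choose k : ℂ) *
      ((-1) ^ k * ((1 - X : ℂ[X]) ^ (r0 - k) * (1 + X) ^ (n - s - (r0 - k))).coeff (r - s)) =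
    (-2) ^ s * kraw (r - s) (r0 - s) (n - 2 * s) := by
  have h1 : ∀ k ∈ range (s + 1), (-1 : ℂ) ^ (s - k) * (s.choose k : ℂ) *
      ((-1) ^ k * ((1 - X : ℂ[X]) ^ (r0 - k) * (1 + X) ^ (n - s - (r0 - k))).coeff (r - s)) =
      (C ((-1) ^ s) * ((1 - X : ℂ[X]) ^ (r0 - s) * (1 + X) ^ (n - 2 * s - (r0 - s)) *
        ((1 + X) ^ k * (1 - X) ^ (s - k) * (s.choose k : ℂ[X])))).coeff (r - s) := by
    intro k hk
    simp only [mem_range] at hk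
    have e1 : r0 - k = (r0 - s) + (s - k) := by omega
    have e2 : n - s - (r0 - s + (s - k)) = (n - 2 * s - (r0 - s)) + k := by omega
    have e3 : (-1 : ℂ) ^ s = (-1) ^ (s - k) * (-1) ^ k := by rw [← pow_add]; congr 1; omega
    rw [e1, e2, coeff_C_mul, e3, ← C_eq_natCast, ← mul_assoc, ← mul_assoc ((1 - X : ℂ[X]) ^ (r0 - s) * _),
      coeff_mul_C, pow_add, pow_add]
    have : ((1 - X : ℂ[X]) ^ (r0 - s) * (1 - X) ^ (s - k) * ((1 + X) ^ (n - 2 * s - (r0 - s)) * (1 + X) ^ k))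
      = (1 - X : ℂ[X]) ^ (r0 - s) * (1 + X) ^ (n - 2 * s - (r0 - s)) * ((1 + X) ^ k * (1 - X) ^ (s - k)) := by
      ring
    rw [this]; ring
  rw [sum_congr rfl h1, ← finsetSum_coeff, ← mul_sum, ← mul_sum, ← add_pow, aux_kraw]
  have : (1 + X + (1 - X) : ℂ[X]) = C 2 := by
    rw [show (2 : ℂ) = 1 + 1 by norm_num, C_add, C_1]; ring
  rw [this, ← C_pow, coeff_C_mul, coeff_mul_C, neg_pow (2 : ℂ)]
  ring

open Finset Polynomial in
/-- The Fourier block on lifted harmonic functions. -/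
lemma aux_fourier {Ω : Type*} [Fintype Ω] [DecidableEq Ω] (n r r0 s : ℕ)
    (hn : Fintype.card Ω = n) (hr1 : s ≤ r) (hr01 : s ≤ r0) (hr02 : r0 + s ≤ n)
    (f : Finset Ω → ℂ) (hf : HarmFn s f) (x0 : Finset Ω) (hx0 : x0.card = r0) :
    ∑ x ∈ powersetCard r univ, (-1 : ℂ) ^ (x0 ∩ x).card * ∑ y ∈ powersetCard s x, f y =
      (-2) ^ s * kraw (r - s) (r0 - s) (n - 2 * s) * ∑ y ∈ powersetCard s x0, f y := by
  have hN := aux_newton s f hf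
    (fun k => (-1) ^ k * ((1 - X : ℂ[X]) ^ (r0 - k) * (1 + X) ^ (n - s - (r0 - k))).coeff (r - s)) x0
  rw [← aux_kraw_sum n r r0 s hr01 hr02, ← hN]
  simp_rw [mul_sum]
  rw [Finset.sum_comm' (t' := powersetCard s univ)
    (s' := fun y => (powersetCard r univ).filter (fun x => y ⊆ x))]
  · refine sum_congr rfl fun y hy => ?_
    have hy := (mem_powersetCard.mp hy).2
    rw [← sum_mul, mul_comm, aux_superset univ y (subset_univ _) r (by omega), hy]
    congr 1
    have h1 : ∀ z ∈ powersetCard (r - s) (univ \ y), (-1 : ℂ) ^ (x0 ∩ (y ∪ z)).card =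
        (-1) ^ (y ∩ x0).card * (-1) ^ (z ∩ x0).card := by
      intro z hz
      have hd : Disjoint y z := (disjoint_sdiff).mono_right (mem_powersetCard.mp hz).1
      rw [← pow_add, inter_comm x0, union_inter_distrib_right, card_union_of_disjoint]
      exact hd.mono inter_subset_left inter_subset_left
    rw [sum_congr rfl h1, ← mul_sum, aux_char]
    have c1 : ((univ \ y) ∩ x0).card = r0 - (y ∩ x0).card := by
      have : (univ \ y) ∩ x0 = x0 \ (y ∩ x0) := by ext; simp; tauto
      rw [this, card_sdiff_of_subset inter_subset_right, hx0]
    have c2 : ((univ \ y) \ x0).card = n - s - (r0 - (y ∩ x0).card) := by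
      rw [← c1, ← hn, ← hy, ← card_univ, ← card_sdiff_of_subset (subset_univ y), inter_comm, card_sdiff, inter_comm]
    rw [c1, c2]
  · intro x y
    simp only [mem_filter, mem_powersetCard, subset_univ, true_and]
    tauto

lemma aux_cfall (a k : ℕ) : cfall (a : ℂ) k = (a.descFactorial k : ℂ) := by
  induction k with
  | zero => simp [cfall]
  | succ k ih =>
    rw [cfall, Finset.prod_range_succ, ← cfall, ih, Nat.descFactorial_succ]
    by_cases h : k ≤ a
    · push_cast [Nat.cast_sub h]; ring
    · rw [Nat.descFactorial_eq_zero_iff_lt.mpr (by omega)]; simp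

lemma aux_cfall_ne (a k : ℕ) (h : k ≤ a) : cfall (a : ℂ) k ≠ 0 := by
  rw [aux_cfall]
  simp only [ne_eq, Nat.cast_eq_zero, Nat.descFactorial_eq_zero_iff_lt]; omega

lemma aux_cbinom (a k : ℕ) : cbinom (a : ℂ) k = (a.choose k : ℂ) := by
  rw [cbinom, aux_cfall, Nat.descFactorial_eq_factorial_mul_choose]
  have : (k.factorial : ℂ) ≠ 0 := by exact_mod_cast k.factorial_ne_zero
  push_cast; field_simp

/-- coefficients of the Hahn kernel -/
noncomputable def hcoef (n r1 r2 s j : ℕ) : ℂ :=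
  (-1 : ℂ) ^ j * cfall (s : ℂ) j * cfall ((n : ℂ) - s + 1) j /
      (cfall ((n : ℂ) - r1) j * cfall (r2 : ℂ) j)

lemma aux_hahn (n r1 r2 s t : ℕ) :
    hahn n r1 r2 s (t : ℂ) = ∑ j ∈ Finset.range (s + 1), hcoef n r1 r2 s j * (t.choose j : ℂ) := by
  unfold hahn hcoef
  refine Finset.sum_congr rfl fun j _ => ?_
  rw [aux_cbinom]; ring

open Finset in
lemma aux_lift {Ω : Type*} [DecidableEq Ω] (n r s : ℕ)
    (hr1 : s ≤ r) (x y0 : Finset Ω) (hx : x.card = r) :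
    ∑ x' ∈ powersetCard s x, hahn n s s s ((x' \ y0).card : ℂ) =
      (r.choose s : ℂ) * hahn n s r s ((x \ y0).card : ℂ) := by
  simp_rw [aux_hahn]
  rw [sum_comm, mul_sum]
  refine sum_congr rfl fun j hj => ?_
  have hj : j ≤ s := by simp only [mem_range] at hj; omega
  have h1 : ∑ x' ∈ powersetCard s x, ((x' \ y0).card.choose j : ℂ) =
      ((x \ y0).card.choose j : ℂ) * ((r - j).choose (s - j) : ℂ) := by
    have : ∀ x' ∈ powersetCard s x, ((x' \ y0).card.choose j : ℂ) =
        ∑ z ∈ powersetCard j (x' \ y0), 1 := by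
      intro x' _; simp
    rw [sum_congr rfl this, Finset.sum_comm' (t' := powersetCard j (x \ y0))
      (s' := fun z => (powersetCard s x).filter (fun x' => z ⊆ x'))]
    · rw [sum_congr rfl (g := fun _ => ((r - j).choose (s - j) : ℂ)), sum_const, card_powersetCard,
        nsmul_eq_mul]
      intro z hz
      have hz := mem_powersetCard.mp hz
      have := aux_count x z (hz.1.trans sdiff_subset) s (by omega)
      rw [sum_const, nsmul_eq_mul, mul_one, this, hx, hz.2]
    · intro x' z
      simp only [mem_filter, mem_powersetCard, subset_sdiff]
      constructor
      · rintro ⟨⟨a, b⟩, ⟨c, d⟩, e⟩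
        exact ⟨⟨⟨a, b⟩, c⟩, ⟨c.trans a, d⟩, e⟩
      · rintro ⟨⟨⟨a, b⟩, c⟩, ⟨_, d⟩, e⟩
        exact ⟨⟨a, b⟩, ⟨c, d⟩, e⟩
  rw [← mul_sum, h1]
  have h2 : (r.descFactorial j : ℂ) * ((r - j).choose (s - j) : ℂ) =
      (r.choose s : ℂ) * (s.descFactorial j : ℂ) := by
    have := Nat.choose_mul (n := r) (k := s) (s := j) hj
    rw [Nat.descFactorial_eq_factorial_mul_choose, Nat.descFactorial_eq_factorial_mul_choose]
    have h3 : (r.choose s : ℂ) * (s.choose j : ℂ) = (r.choose j : ℂ) * ((r - j).choose (s - j) : ℂ) := by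
      exact_mod_cast this
    push_cast
    linear_combination (-(j.factorial : ℂ)) * h3
  have h3 := aux_cfall_ne r j (by omega)
  have h4 := aux_cfall_ne s j (by omega)
  rw [← aux_cfall, ← aux_cfall] at h2
  have h5 : ((r - j).choose (s - j) : ℂ) = (r.choose s : ℂ) * cfall (s : ℂ) j / cfall (r : ℂ) j := by
    field_simp; linear_combination h2
  rw [h5]
  unfold hcoef
  by_cases h6 : cfall ((n : ℂ) - s) j = 0
  · simp [h6]
  · field_simp

open Finset in
lemma aux_hcoef_ss (n s j : ℕ) (hs : 2 * s ≤ n) (hj : j ≤ s) :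
    hcoef n s s s j * ((n : ℂ) - s + 1 - j) = (-1) ^ j * ((n : ℂ) - s + 1) := by
  obtain ⟨N, rfl⟩ := Nat.exists_eq_add_of_le (show s ≤ n by omega)
  have h4 := aux_cfall_ne s j hj
  have h5 := aux_cfall_ne N j (by omega)
  have e1 : (((s + N : ℕ) : ℂ) - s + 1) = ((N + 1 : ℕ) : ℂ) := by push_cast; ring
  have e2 : (((s + N : ℕ) : ℂ) - s) = (N : ℂ) := by push_cast; ring
  have key : cfall ((N + 1 : ℕ) : ℂ) j * ((N + 1 : ℕ) - j : ℂ) = ((N + 1 : ℕ) : ℂ) * cfall (N : ℂ) j := by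
    have : cfall ((N + 1 : ℕ) : ℂ) (j + 1) = ((N + 1 : ℕ) : ℂ) * cfall (N : ℂ) j := by
      rw [aux_cfall, aux_cfall, Nat.succ_descFactorial_succ]; push_cast; ring
    rw [← this, cfall, cfall, prod_range_succ]
  unfold hcoef
  rw [e1, e2]
  field_simp
  linear_combination key

open Finset in
lemma aux_rec (n s t : ℕ) (hs : 2 * s ≤ n) (ht : t + 1 ≤ s) :
    ((t : ℂ) + 1) * hahn n s s s (t : ℂ) + ((n : ℂ) - s - t) * hahn n s s s ((t + 1 : ℕ) : ℂ) = 0 := by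
  rw [aux_hahn, aux_hahn, mul_sum, mul_sum, ← sum_add_distrib]
  have h1 : ∀ j ∈ range (s + 1), ((t : ℂ) + 1) * (hcoef n s s s j * (t.choose j : ℂ)) +
      ((n : ℂ) - s - t) * (hcoef n s s s j * ((t + 1).choose j : ℂ)) =
      ((n : ℂ) - s + 1) * ((-1) ^ j * ((t + 1).choose j : ℂ)) := by
    intro j hj
    have hj : j ≤ s := by simp only [mem_range] at hj; omega
    have h2 := aux_hcoef_ss n s j hs hj
    have h3 : ((t : ℂ) + 1) * (t.choose j : ℂ) = ((t : ℂ) + 1 - j) * ((t + 1).choose j : ℂ) := by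
      by_cases h : j ≤ t + 1
      · have := Nat.choose_mul_succ_eq t j
        have h4 : ((t.choose j * (t + 1) : ℕ) : ℂ) = (((t + 1).choose j * (t + 1 - j) : ℕ) : ℂ) := by
          exact_mod_cast this
        push_cast [Nat.cast_sub h] at h4
        linear_combination h4
      · rw [Nat.choose_eq_zero_of_lt (by omega), Nat.choose_eq_zero_of_lt (by omega)]; simp
    linear_combination (hcoef n s s s j) * h3 + ((t + 1).choose j : ℂ) * h2
  rw [sum_congr rfl h1, ← mul_sum]
  have h5 := Int.alternating_sum_range_choose (n := t + 1)
  simp only [Nat.add_eq_zero_iff, one_ne_zero, and_false, if_false] at h5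
  have h6 : ∑ m ∈ range (t + 1 + 1), (-1 : ℂ) ^ m * ((t + 1).choose m : ℂ) = 0 := by
    exact_mod_cast congrArg (Int.cast : ℤ → ℂ) h5
  rw [← sum_subset (s₁ := range (t + 1 + 1)), h6, mul_zero]
  · intro a; simp only [mem_range]; omega
  · intro j _ hj
    simp only [mem_range, not_lt] at hj
    rw [Nat.choose_eq_zero_of_lt (by omega)]; simp

open Finset in
lemma aux_harm {Ω : Type*} [Fintype Ω] [DecidableEq Ω] (n s : ℕ)
    (hn : Fintype.card Ω = n) (hs : 2 * s ≤ n) (y0 : Finset Ω) (hy0 : y0.card = s) :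
    HarmFn s (fun x : Finset Ω => hahn n s s s ((x \ y0).card : ℂ)) := by
  apply aux_harm_of_pred
  intro w hw
  have hsplit : wᶜ = (y0 \ w) ∪ (w ∪ y0)ᶜ := by ext a; simp; tauto
  have hdisj : Disjoint (y0 \ w) (w ∪ y0)ᶜ := by
    rw [disjoint_left]; intro a; simp; tauto
  rw [hsplit, sum_union hdisj]
  set t := (w \ y0).card with ht
  have a1 : ∀ ω ∈ y0 \ w, hahn n s s s ((insert ω w \ y0).card : ℂ) = hahn n s s s (t : ℂ) := by
    intro ω hω
    rw [insert_sdiff_of_mem _ (mem_sdiff.mp hω).1]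
  have a2 : ∀ ω ∈ (w ∪ y0)ᶜ, hahn n s s s ((insert ω w \ y0).card : ℂ) =
      hahn n s s s ((t + 1 : ℕ) : ℂ) := by
    intro ω hω
    simp only [mem_compl, mem_union, not_or] at hω
    rw [insert_sdiff_of_notMem _ hω.2, card_insert_of_notMem (by simp [hω.1])]
  rw [sum_congr rfl a1, sum_congr rfl a2, sum_const, sum_const, nsmul_eq_mul, nsmul_eq_mul]
  have b0 := card_sdiff_add_card_inter w y0
  have b1 := card_sdiff_add_card_inter y0 w
  rw [inter_comm] at b1
  have c1 : (y0 \ w).card = t + 1 := by omega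
  have b2 := card_union_add_card_inter w y0
  have b3 := card_compl_add_card (w ∪ y0)
  have c2 : (w ∪ y0)ᶜ.card + s + t = n := by omega
  have c3 : ((w ∪ y0)ᶜ.card : ℂ) = (n : ℂ) - s - t := by
    rw [← c2]; push_cast; ring
  rw [c1, c3]
  have := aux_rec n s t hs (by omega)
  push_cast at this ⊢
  exact this

open Finset in
lemma aux_down {Ω : Type*} [Fintype Ω] [DecidableEq Ω] (n r0 s : ℕ)
    (hn : Fintype.card Ω = n) (hr01 : s ≤ r0)
    (f : Finset Ω → ℂ) (hf : HarmFn s f) (y1 : Finset Ω) (hy1 : y1.card = s) :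
    ∑ x ∈ powersetCard r0 univ, hahn n r0 s s ((y1 \ x).card : ℂ) * ∑ y ∈ powersetCard s x, f y =
      (-1) ^ s * hcoef n r0 s s s * ((n - 2 * s).choose (r0 - s) : ℂ) * f y1 := by
  have hdis : ∀ z : Finset Ω, ∑ y ∈ (powersetCard s univ).filter (fun y => Disjoint y z), f y =
      (-1) ^ s * ∑ y ∈ powersetCard s z, f y := by
    intro z
    have hN := aux_newton s f hf (fun k => if k = 0 then 1 else 0) z
    simp only [mul_ite, mul_one, mul_zero, sum_ite_eq', card_eq_zero, ← disjoint_iff_inter_eq_empty,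
      ← sum_filter] at hN
    rw [hN]
    simp
  have hj : ∀ j, ∑ x ∈ powersetCard r0 univ, ((y1 \ x).card.choose j : ℂ) *
      ∑ y ∈ powersetCard s x, f y = ∑ z ∈ powersetCard j y1,
        ((n - j - s).choose (r0 - s) : ℂ) * ((-1) ^ s * ∑ y ∈ powersetCard s z, f y) := by
    intro j
    have e1 : ∀ x ∈ powersetCard r0 (univ : Finset Ω), ((y1 \ x).card.choose j : ℂ) *
      ∑ y ∈ powersetCard s x, f y = ∑ z ∈ powersetCard j (y1 \ x), ∑ y ∈ powersetCard s x, f y := by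
      intro x _
      rw [sum_const, card_powersetCard, nsmul_eq_mul]
    rw [sum_congr rfl e1, Finset.sum_comm' (t' := powersetCard j y1)
      (s' := fun z => powersetCard r0 (univ \ z))]
    · refine sum_congr rfl fun z hz => ?_
      have hz := mem_powersetCard.mp hz
      rw [← hdis, mul_sum, Finset.sum_comm' (t' := (powersetCard s univ).filter (fun y => Disjoint y z))
        (s' := fun y => (powersetCard r0 (univ \ z)).filter (fun x => y ⊆ x))]
      · refine sum_congr rfl fun y hy => ?_
        simp only [mem_filter, mem_powersetCard] at hy
        rw [sum_const, nsmul_eq_mul, aux_count _ _ (by rw [subset_sdiff]; exact ⟨subset_univ _, hy.2⟩) _ (by omega),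
          card_sdiff_of_subset (subset_univ _), card_univ, hn, hz.2, hy.1.2]
      · intro x y
        simp only [mem_filter, mem_powersetCard, subset_sdiff, subset_univ, true_and]
        constructor
        · rintro ⟨⟨a, b⟩, c, d⟩
          exact ⟨⟨⟨a, b⟩, c⟩, d, a.mono_left c⟩
        · rintro ⟨⟨⟨a, b⟩, c⟩, d, _⟩
          exact ⟨⟨a, b⟩, c, d⟩
    · intro x z
      simp only [mem_powersetCard, subset_sdiff, subset_univ, true_and]
      rw [disjoint_comm]
      tauto
  simp_rw [aux_hahn, sum_mul]
  rw [sum_comm]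
  simp_rw [mul_assoc, ← mul_sum, hj]
  rw [sum_range_succ, sum_eq_zero, zero_add]
  · rw [← hy1, powersetCard_self, sum_singleton, powersetCard_self, sum_singleton]
    rw [show n - y1.card - y1.card = n - 2 * y1.card by omega]
    ring
  · intro j hj
    simp only [mem_range] at hj
    rw [sum_eq_zero, mul_zero]
    intro z hz
    rw [powersetCard_eq_empty.mpr (by rw [(mem_powersetCard.mp hz).2]; exact hj)]
    simp

open Finset in
lemma aux_sub {Ω : Type*} [Fintype Ω] [DecidableEq Ω] (r : ℕ) (g : Finset Ω → ℂ) :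
    ∑ x : {x : Finset Ω // x.card = r}, g x = ∑ x ∈ powersetCard r univ, g x :=
  (Finset.sum_subtype _ (by simp [mem_powersetCard]) g).symm

open Finset in
lemma aux_consts (n r r0 s : ℕ) (hs : 2 * s ≤ n)
    (hr1 : s ≤ r) (hr2 : r ≤ n - s) (hr01 : s ≤ r0) (hr02 : r0 ≤ n - s) :
    alphaConst n r0 s s * (alphaConst n s r s * (r.choose s : ℂ)⁻¹ *
      ((-2) ^ s * kraw (r - s) (r0 - s) (n - 2 * s)) *
      ((-1) ^ s * hcoef n r0 s s s * ((n - 2 * s).choose (r0 - s) : ℂ))) =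
    kCoef n r r0 s * alphaConst n s s s := by
  have g1 := aux_cfall_ne (n - r0) s (by omega)
  have g2 := aux_cfall_ne s s le_rfl
  have g3 := aux_cfall_ne (n - s + 1) s (by omega)
  have e1 : ((n - r0 : ℕ) : ℂ) = (n : ℂ) - r0 := by rw [Nat.cast_sub (by omega)]
  have e3 : ((n - s + 1 : ℕ) : ℂ) = (n : ℂ) - s + 1 := by
    rw [Nat.cast_add, Nat.cast_sub (by omega)]; simp
  rw [e1] at g1
  rw [e3] at g3
  have e4 : cfall (r : ℂ) s = (s.factorial : ℂ) * (r.choose s : ℂ) := by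
    rw [aux_cfall, Nat.descFactorial_eq_factorial_mul_choose]; push_cast; ring
  have e5 : cfall (s : ℂ) s = (s.factorial : ℂ) := by
    rw [aux_cfall, Nat.descFactorial_self]
  have g4 : (s.factorial : ℂ) ≠ 0 := by exact_mod_cast s.factorial_ne_zero
  have g5 : (r.choose s : ℂ) ≠ 0 := by exact_mod_cast (Nat.choose_pos hr1).ne'
  have p0 : 0 < (n - 2 * s).choose (r0 - s) := Nat.choose_pos (by omega)
  have p1 : 0 < (n - 2 * s).choose (r - s) := Nat.choose_pos (by omega)
  have sg : (-1 : ℂ) ^ s * (-1) ^ s = 1 := by rw [← mul_pow]; simp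
  unfold hcoef kCoef alphaConst
  rw [e4, e5]
  generalize (n - 2 * s).choose (r0 - s) = a at *
  generalize (n - 2 * s).choose (r - s) = b at *
  have qa : (Real.sqrt a : ℂ) ≠ 0 := by
    exact_mod_cast (Real.sqrt_pos.mpr (by exact_mod_cast p0)).ne'
  have qb : (Real.sqrt b : ℂ) ≠ 0 := by
    exact_mod_cast (Real.sqrt_pos.mpr (by exact_mod_cast p1)).ne'
  have sa : (a : ℂ) = (Real.sqrt a : ℂ) * (Real.sqrt a : ℂ) := by
    rw [← Complex.ofReal_mul, Real.mul_self_sqrt (Nat.cast_nonneg a)]; simp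
  rw [Real.sqrt_div (Nat.cast_nonneg a)]
  simp only [Nat.sub_self, Nat.choose_zero_right, Nat.cast_one, mul_one, one_mul, Real.sqrt_one,
    Complex.ofReal_one, Complex.ofReal_div]
  rw [sa]
  generalize (Real.sqrt a : ℂ) = qa' at *
  generalize (Real.sqrt b : ℂ) = qb' at *
  field_simp
  linear_combination (cfall ((n : ℂ) - s) s * kraw (r - s) (r0 - s) (n - 2 * s)) * sg

/-- On the `s`-isotypic block, the Fourier transform acts with matrix entries `k_s^{r,r0}`:
`Λ̃_s^{r0,s} ∘ F^{r→r0} ∘ Λ̃_s^{s,r} = k_s^{r,r0} Λ̃_s^{s,s}`. -/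
theorem stmt_19 {Ω : Type*} [Fintype Ω] [DecidableEq Ω] (n r r0 s : ℕ)
    (hn : Fintype.card Ω = n) (hs : 2 * s ≤ n)
    (hr1 : s ≤ r) (hr2 : r ≤ n - s) (hr01 : s ≤ r0) (hr02 : r0 ≤ n - s)
    (ψ : {x : Finset Ω // x.card = s} → ℂ) :
    LamT Ω n r0 s s (Fblock Ω r r0 (LamT Ω n s r s ψ)) =
      kCoef n r r0 s • LamT Ω n s s s ψ := by

  let G : Finset Ω → ℂ := fun x =>
    ∑ y0 : {x : Finset Ω // x.card = s}, hahn n s s s ((x \ (y0 : Finset Ω)).card : ℂ) * ψ y0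
  have hG : HarmFn s G := by
    intro w hw
    simp only [G]
    rw [Finset.sum_comm]
    refine Finset.sum_eq_zero fun y0 _ => ?_
    rw [← Finset.sum_mul, aux_harm n s hn hs y0 y0.2 w hw, zero_mul]
  have hL : ∀ x : {x : Finset Ω // x.card = r}, Lam Ω n s r s ψ x =
      (r.choose s : ℂ)⁻¹ * ∑ y ∈ Finset.powersetCard s (x : Finset Ω), G y := by
    intro x
    have g5 : (r.choose s : ℂ) ≠ 0 := by exact_mod_cast (Nat.choose_pos hr1).ne'
    simp only [G, Lam]
    rw [Finset.sum_comm, Finset.mul_sum]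
    refine Finset.sum_congr rfl fun y0 _ => ?_
    rw [← Finset.sum_mul, aux_lift n r s hr1 x.1 y0.1 x.2]
    field_simp
  have hF : ∀ x : {x : Finset Ω // x.card = r0}, Fblock Ω r r0 (LamT Ω n s r s ψ) x =
      alphaConst n s r s * (r.choose s : ℂ)⁻¹ *
        ((-2) ^ s * kraw (r - s) (r0 - s) (n - 2 * s)) *
        ∑ y ∈ Finset.powersetCard s (x : Finset Ω), G y := by
    intro x
    have h := aux_fourier n r r0 s hn hr1 hr01 (by omega) G hG x x.2
    rw [mul_assoc, ← h, ← aux_sub r (fun x' => (-1 : ℂ) ^ ((x : Finset Ω) ∩ x').card *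
      ∑ y ∈ Finset.powersetCard s x', G y), Finset.mul_sum]
    simp only [Fblock, LamT]
    refine Finset.sum_congr rfl fun x' _ => ?_
    rw [hL]; ring
  funext y1
  have hD := aux_down n r0 s hn hr01 G hG y1 y1.2
  rw [← aux_sub r0 (fun x => hahn n r0 s s (((y1 : Finset Ω) \ x).card : ℂ) *
      ∑ y ∈ Finset.powersetCard s x, G y)] at hD
  have hC := aux_consts n r r0 s hs hr1 hr2 hr01 hr02
  have hR : Lam Ω n s s s ψ y1 = G y1 := rfl
  have hlast : Lam Ω n r0 s s (Fblock Ω r r0 (LamT Ω n s r s ψ)) y1 =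
      alphaConst n s r s * (r.choose s : ℂ)⁻¹ *
        ((-2) ^ s * kraw (r - s) (r0 - s) (n - 2 * s)) *
      ((-1) ^ s * hcoef n r0 s s s * ((n - 2 * s).choose (r0 - s) : ℂ) * G y1) := by
    rw [← hD, Finset.mul_sum]
    simp only [Lam]
    refine Finset.sum_congr rfl fun x _ => ?_
    rw [hF]; ring
  rw [Pi.smul_apply, smul_eq_mul]
  change alphaConst n r0 s s * Lam Ω n r0 s s (Fblock Ω r r0 (LamT Ω n s r s ψ)) y1 =
    kCoef n r r0 s * (alphaConst n s s s * Lam Ω n s s s ψ y1)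
  rw [hlast, hR]
  linear_combination (G y1) * hC
end
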